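/- arXiv:1910.14065 — 2 statements merged into one kernel-verified Lean document; each statement's English description precedes it below -/
import Mathlib

section
/- Let S be a finite set, d ≥ 0, and for each p ∈ S let n_1(p),…,n_d(p) be nonzero integers. Suppose p₀ ∈ S satisfies n_i(p₀) > 0 for all i, and for every p ∈ S with p ≠ p₀ there is some i with n_i(p) = −1. If F(y) ∈ ℤ[y] is a polynomial such that F(y) = ∑_{p∈S} ∏_{i=1}^d (1 + y·q^{n_i(p)})/(1 − q^{n_i(p)}) holds in the field of rational functions ℚ(q,y) (where q^n for n < 0 denotes the inverse of q^{−n}), then F(−q) = ∏_{i=1}^d (1 − q^{n_i(p₀)+1})/(1 − q^{n_i(p₀)}) in ℚ(q). -/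
/-!
Write `K = ℚ(q)`. Each denominator `1 - q ^ n` lies in `K`, so every summand on the right of the
hypothesis is a polynomial in `y` over `K`, and the hypothesis is an identity in `K[y]`. It may
therefore be evaluated at `y = -q`. For `p ≠ p₀` the factor with `n p i = -1` becomes
`1 - q * q⁻¹ = 0`, so only the summand of `p₀` survives.
-/

set_option autoImplicit false
set_option maxHeartbeats 1000000

/-- The polynomial over `ℚ(q)` that represents the summand with weights `m`. -/
noncomputable def summandPoly {d : ℕ} (m : Fin d → ℤ) : Polynomial (RatFunc ℚ) :=
  ∏ i : Fin d, (1 + Polynomial.X * Polynomial.C ((RatFunc.X : RatFunc ℚ) ^ m i))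
    * Polynomial.C ((1 - (RatFunc.X : RatFunc ℚ) ^ m i)⁻¹)

theorem algebraMap_summandPoly {d : ℕ} (m : Fin d → ℤ) :
    algebraMap (Polynomial (RatFunc ℚ)) (RatFunc (RatFunc ℚ)) (summandPoly m)
      = ∏ i : Fin d, (1 + RatFunc.X * RatFunc.C (RatFunc.X : RatFunc ℚ) ^ (m i))
            / (1 - RatFunc.C (RatFunc.X : RatFunc ℚ) ^ (m i)) := by
  simp only [summandPoly, map_prod, map_mul, map_add, map_one, RatFunc.algebraMap_X,
    RatFunc.algebraMap_C, map_inv₀, map_sub, map_zpow₀, div_eq_mul_inv]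

theorem eval_summandPoly {d : ℕ} (m : Fin d → ℤ) :
    (summandPoly m).eval (-(RatFunc.X : RatFunc ℚ))
      = ∏ i : Fin d, (1 - (RatFunc.X : RatFunc ℚ) ^ (m i + 1))
          / (1 - (RatFunc.X : RatFunc ℚ) ^ (m i)) := by
  simp only [summandPoly, Polynomial.eval_prod, Polynomial.eval_mul, Polynomial.eval_add,
    Polynomial.eval_one, Polynomial.eval_X, Polynomial.eval_C, div_eq_mul_inv]
  refine Finset.prod_congr rfl fun i _ => ?_
  rw [zpow_add_one₀ RatFunc.X_ne_zero]
  ring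

theorem stmt_15
    (S : Type) [Fintype S] (d : ℕ)
    (n : S → Fin d → ℤ) (hn : ∀ (p : S) (i : Fin d), n p i ≠ 0)
    (p₀ : S) (hp₀ : ∀ i : Fin d, 0 < n p₀ i)
    (hneg : ∀ p : S, p ≠ p₀ → ∃ i : Fin d, n p i = -1)
    (F : Polynomial ℤ)
    (hF : Polynomial.aeval (RatFunc.X : RatFunc (RatFunc ℚ)) F
      = ∑ p : S, ∏ i : Fin d,
          (1 + RatFunc.X * RatFunc.C (RatFunc.X : RatFunc ℚ) ^ (n p i))
            / (1 - RatFunc.C (RatFunc.X : RatFunc ℚ) ^ (n p i))) :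
    Polynomial.aeval (-(RatFunc.X : RatFunc ℚ)) F
      = ∏ i : Fin d, (1 - (RatFunc.X : RatFunc ℚ) ^ (n p₀ i + 1))
          / (1 - (RatFunc.X : RatFunc ℚ) ^ (n p₀ i)) := by
  have key : Polynomial.aeval (Polynomial.X : Polynomial (RatFunc ℚ)) F
      = ∑ p : S, summandPoly (n p) := by
    apply RatFunc.algebraMap_injective (RatFunc ℚ)
    rw [map_sum]
    simp only [algebraMap_summandPoly]
    rw [← hF, ← RatFunc.algebraMap_X]
    simp [Polynomial.aeval_def, Polynomial.eval₂_eq_sum_range, map_sum]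
  have hev : Polynomial.aeval (-(RatFunc.X : RatFunc ℚ)) F
      = (Polynomial.aeval (Polynomial.X : Polynomial (RatFunc ℚ)) F).eval (-RatFunc.X) := by
    simp [Polynomial.aeval_def, Polynomial.eval₂_eq_sum_range, Polynomial.eval_finsetSum]
  rw [hev, key, Polynomial.eval_finsetSum, Finset.sum_eq_single p₀, eval_summandPoly]
  · intro p _ hp
    obtain ⟨i, hi⟩ := hneg p hp
    rw [eval_summandPoly]
    exact Finset.prod_eq_zero (Finset.mem_univ i) (by simp [hi])
  · simp
end

section
/- For integers a, b with 0 < a ≤ b, the polynomial (1 − q^a)(1 − q^b) divides (1 − q^{a+1})(1 − q^{b+1}) in ℚ[q] if and only if (a,b) is one of (1,1), (1,2), or (2,3); equivalently, the rational function (1 − q^{a+1})(1 − q^{b+1}) / ((1 − q^a)(1 − q^b)) ∈ ℚ(q) is a polynomial exactly for these three pairs. -/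
/-!
Evaluate at primitive roots of unity. If `b ≥ 2`, a primitive `b`-th root of unity is a root of
`1 - X ^ b`, hence of `1 - X ^ (a + 1)` or of `1 - X ^ (b + 1)`; so `b ∣ a + 1`, the alternative
`b ∣ b + 1` being impossible. As `a ≤ b`, this forces `b = a + 1`. Cancelling `1 - X ^ (a + 1)`
leaves `1 - X ^ a ∣ 1 - X ^ (a + 2)`, and a primitive `a`-th root of unity gives `a ∣ 2`.
-/

/-- If `ζ` is a primitive `n`-th root of unity in `ℂ`, then `ζ` is a root of `1 - X ^ n`, so one of
the factors on the right vanishes at `ζ`. -/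
lemma dvd_or_dvd_of_one_sub_X_pow_dvd {n k l : ℕ} (hn : n ≠ 0)
    (h : (1 - (Polynomial.X : Polynomial ℚ) ^ n)
      ∣ (1 - Polynomial.X ^ k) * (1 - Polynomial.X ^ l)) : n ∣ k ∨ n ∣ l := by
  have hζ := Complex.isPrimitiveRoot_exp n hn
  set ζ := Complex.exp (2 * Real.pi * Complex.I / n)
  have h2 := map_dvd (Polynomial.aeval (R := ℚ) ζ) h
  simp only [map_mul, map_sub, map_one, map_pow, Polynomial.aeval_X, hζ.pow_eq_one, sub_self,
    zero_dvd_iff, mul_eq_zero, sub_eq_zero] at h2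
  exact h2.imp (fun e => hζ.dvd_of_pow_eq_one _ e.symm) (fun e => hζ.dvd_of_pow_eq_one _ e.symm)

theorem stmt_16 (a b : ℕ) (ha : 0 < a) (hab : a ≤ b) :
    ((1 - (Polynomial.X : Polynomial ℚ) ^ a) * (1 - Polynomial.X ^ b)
        ∣ (1 - Polynomial.X ^ (a + 1)) * (1 - Polynomial.X ^ (b + 1)))
      ↔ ((a = 1 ∧ b = 1) ∨ (a = 1 ∧ b = 2) ∨ (a = 2 ∧ b = 3)) := by
  constructor
  · intro h
    by_cases hb : b = 1
    · omega
    have hba : b ∣ a + 1 := by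
      rcases dvd_or_dvd_of_one_sub_X_pow_dvd (by omega) ((Dvd.intro_left _ rfl).trans h) with h1 | h1
      · exact h1
      · exact absurd (Nat.dvd_one.mp ((Nat.dvd_add_right dvd_rfl).mp h1)) hb
    have hle := Nat.le_of_dvd (by omega) hba
    have hne : b ≠ a := by
      rintro rfl
      exact hb (Nat.dvd_one.mp ((Nat.dvd_add_right dvd_rfl).mp hba))
    obtain rfl : b = a + 1 := by omega
    have hnz : (1 - (Polynomial.X : Polynomial ℚ) ^ (a + 1)) ≠ 0 := by
      intro h0
      have := congrArg (Polynomial.eval 0) h0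
      simp at this
    rw [mul_comm, mul_dvd_mul_iff_left hnz] at h
    have h2 : a ∣ a + 2 := or_self_iff.mp
      (dvd_or_dvd_of_one_sub_X_pow_dvd ha.ne' (h.trans (Dvd.intro _ rfl)))
    have := Nat.le_of_dvd (by omega) ((Nat.dvd_add_right dvd_rfl).mp h2)
    omega
  · rintro (⟨rfl, rfl⟩ | ⟨rfl, rfl⟩ | ⟨rfl, rfl⟩)
    · exact ⟨(1 + Polynomial.X) ^ 2, by ring⟩
    · exact ⟨1 + Polynomial.X + Polynomial.X ^ 2, by ring⟩
    · exact ⟨1 + Polynomial.X ^ 2, by ring⟩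
end
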